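/- Let σ = {b_{1}, b_{j_2}, …, b_k} ⊆ B with subscripts 1 < j_2 < … < k ≤ m, such that σ is not contained in B_s for any s ∈ {1,…,m}. Assume j_2 ≤ d+1 and k = j_2 + m − d − 1. Then for every i ∈ {2,…,m} with b_i ∉ σ and either i > k or 2 ≤ i ≤ j_2 − 1, the set (σ ∪ {b_i}) \ {b_1} is not contained in B_s for any s ∈ {1,…,m}. -/

import Mathlib

open Finset

/-- The graph `G_m^d` on vertex set `Fin m ⊕ Fin m` (0-based indexing):
`Sum.inl i` is the vertex `a_{i+1}` and `Sum.inr j` is the vertex `b_{j+1}` of the paper;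
`a_i` is adjacent to `b_j` iff `(j - i) mod m ∈ {0, …, d-1}`. -/
def Gmd (m d : ℕ) : SimpleGraph (Fin m ⊕ Fin m) :=
  SimpleGraph.fromRel (fun u v =>
    ∃ i j : Fin m, u = Sum.inl i ∧ v = Sum.inr j ∧ (j.val + m - i.val) % m < d)

/-- A finite set of vertices is independent iff no two of its elements are adjacent. -/
def IsInd (m d : ℕ) (σ : Finset (Fin m ⊕ Fin m)) : Prop :=
  ∀ u ∈ σ, ∀ v ∈ σ, ¬ (Gmd m d).Adj u v

/-- The face poset `P` of the independence complex `Ind (G_m^d)` (ordered by `⊆`),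
including the empty simplex. -/
def faceP (m d : ℕ) : Set (Finset (Fin m ⊕ Fin m)) := {σ | IsInd m d σ}

/-- One step of the matching construction: `S_x(T) = {σ ∈ T | x ∉ σ, σ ∪ {x} ∈ T}`. -/
def stepS {α : Type*} [DecidableEq α] (x : α) (T : Set (Finset α)) : Set (Finset α) :=
  {σ | σ ∈ T ∧ x ∉ σ ∧ insert x σ ∈ T}

/-- The survivors of one step: `T \ (S_x(T) ∪ μ_x(S_x(T)))`. -/
def stepSurv {α : Type*} [DecidableEq α] (x : α) (T : Set (Finset α)) : Set (Finset α) :=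
  T \ (stepS x T ∪ (insert x) '' (stepS x T))

/-- Iterating the matching construction along a list of vertices. -/
def phase {α : Type*} [DecidableEq α] (T : Set (Finset α)) (l : List α) : Set (Finset α) :=
  l.foldl (fun T x => stepSurv x T) T

/-- The list `a_1, …, a_m`. -/
def listA (m : ℕ) : List (Fin m ⊕ Fin m) := (List.finRange m).map Sum.inl
/-- The list `b_1, …, b_m`. -/
def listB (m : ℕ) : List (Fin m ⊕ Fin m) := (List.finRange m).map Sum.inr

/-- `S_{a_{i+1}}` (0-based `i`): the set matched with `a_{i+1}` at stage `i+1` of phase one. -/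
def Sa (m d : ℕ) (i : Fin m) : Set (Finset (Fin m ⊕ Fin m)) :=
  stepS (Sum.inl i) (phase (faceP m d) ((listA m).take i.val))

/-- `M = P \ (S_1 ∪ μ_1(S_1))`, the simplices surviving phase one. -/
def setM (m d : ℕ) : Set (Finset (Fin m ⊕ Fin m)) := phase (faceP m d) (listA m)

/-- `S_{b_{i+1}}` (0-based `i`): the set matched with `b_{i+1}` at stage `i+1` of phase two. -/
def Sb (m d : ℕ) (i : Fin m) : Set (Finset (Fin m ⊕ Fin m)) :=
  stepS (Sum.inr i) (phase (setM m d) ((listB m).take i.val))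

/-- `𝒮_{a_{i+1}} = S_{a_{i+1}} ∪ μ_{a_{i+1}}(S_{a_{i+1}})`. -/
def scriptSa (m d : ℕ) (i : Fin m) : Set (Finset (Fin m ⊕ Fin m)) :=
  Sa m d i ∪ (insert (Sum.inl i)) '' (Sa m d i)

/-- `𝒮_{b_{i+1}} = S_{b_{i+1}} ∪ μ_{b_{i+1}}(S_{b_{i+1}})`. -/
def scriptSb (m d : ℕ) (i : Fin m) : Set (Finset (Fin m ⊕ Fin m)) :=
  Sb m d i ∪ (insert (Sum.inr i)) '' (Sb m d i)

/-- The critical cells `C = P \ (S ∪ μ(S))`. -/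
def setC (m d : ℕ) : Set (Finset (Fin m ⊕ Fin m)) :=
  faceP m d \ ((⋃ i : Fin m, scriptSa m d i) ∪ (⋃ i : Fin m, scriptSb m d i))

/-- The matching relation: `MatchRel σ τ` iff `τ = μ(σ)` for `σ ∈ S = S_1 ∪ S_2`. -/
def MatchRel (m d : ℕ) (σ τ : Finset (Fin m ⊕ Fin m)) : Prop :=
  (∃ i : Fin m, σ ∈ Sa m d i ∧ τ = insert (Sum.inl i) σ) ∨
  (∃ i : Fin m, σ ∈ Sb m d i ∧ τ = insert (Sum.inr i) σ)

/-- `B_{s+1} = {b_{s+1}, b_{s+2}, …, b_{s+m-d}}` (0-based `s`, subscripts mod `m`). -/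
def Bset (m d : ℕ) (s : Fin m) : Finset (Fin m ⊕ Fin m) :=
  (Finset.univ.filter (fun j : Fin m => (j.val + m - s.val) % m < m - d)).image Sum.inr

/-- `b_{n+1} ∈ σ` (0-based subscript `n`). -/
def hasB (m : ℕ) (σ : Finset (Fin m ⊕ Fin m)) (n : ℕ) : Prop :=
  ∃ j : Fin m, j.val = n ∧ Sum.inr j ∈ σ

/-- `σ ⊆ B`. -/
def onlyB (m : ℕ) (σ : Finset (Fin m ⊕ Fin m)) : Prop :=
  ∀ v ∈ σ, ∃ j : Fin m, v = Sum.inr j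

/-- Property `P_l` of the paper, with parameter `j1` (0-based: the paper's `j_1 - 1`, so
`1 ≤ j1 ≤ d`).  With 0-based subscripts `i_r = (r-1)(d+1)`, `j_r = j1 + (r-1)(d+1)` and
`k = m + j1 - (d+1)`:  σ ∈ M, σ ⊆ B, the `2l` smallest subscripts of σ are exactly
`0 = i_1, j_1, i_2, j_2, …, i_l, j_l`, the largest subscript is `k`, and
`σ \ {b_{i_r}} ∉ M`, `σ \ {b_{j_r}} ∉ M` for all `1 ≤ r ≤ l`. -/
def propP (m d l j1 : ℕ) (σ : Finset (Fin m ⊕ Fin m)) : Prop :=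
  σ ∈ setM m d ∧ onlyB m σ ∧ 1 ≤ j1 ∧ j1 ≤ d ∧
  (∀ r, 1 ≤ r → r ≤ l → hasB m σ ((r-1)*(d+1)) ∧ hasB m σ (j1 + (r-1)*(d+1))) ∧
  (∀ j : Fin m, Sum.inr j ∈ σ → j.val ≤ j1 + (l-1)*(d+1) →
      ∃ r, 1 ≤ r ∧ r ≤ l ∧ (j.val = (r-1)*(d+1) ∨ j.val = j1 + (r-1)*(d+1))) ∧
  hasB m σ (m + j1 - (d+1)) ∧
  (∀ j : Fin m, Sum.inr j ∈ σ → j.val ≤ m + j1 - (d+1)) ∧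
  (∀ r, 1 ≤ r → r ≤ l → ∀ j : Fin m,
      (j.val = (r-1)*(d+1) ∨ j.val = j1 + (r-1)*(d+1)) → σ.erase (Sum.inr j) ∉ setM m d)

/-!
The endpoints of the arc `B_p` are `b_p` and the vertex `b_q` lying `d + 1` steps before `b_p`, and
the vertices outside `B_p` are the `d` vertices strictly between `b_q` and `b_p`. An arc `B_s ≠ B_p`
containing both endpoints has to run from `b_q` to `b_p` through all of them, so it covers the
complement of `B_p`. Hence, if `b_p, b_q ∈ σ`, a vertex of `σ` outside `B_p` can be exchanged for
any other vertex outside `B_p` without the set becoming contained in an arc.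
-/

section Arcs

variable {m d : ℕ} {p q s x : Fin m}

theorem inr_mem_Bset_iff : Sum.inr x ∈ Bset m d s ↔ (x - s).val < m - d := by
  have hsub : x.val + m - s.val = m - s.val + x.val := by omega
  simp [Bset, Fin.val_sub, hsub]

theorem val_sub_add_val_sub_modEq (p s x : Fin m) :
    (p - s).val + (x - p).val ≡ (x - s).val [MOD m] := by
  have := p.neZero
  rw [← sub_add_sub_cancel' p s x, Fin.val_add]
  exact (Nat.mod_modEq _ _).symm

theorem inr_mem_Bset_self (hdm : d < m) : Sum.inr p ∈ Bset m d p := by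
  have := p.neZero
  rw [inr_mem_Bset_iff, sub_self, Fin.val_zero]
  exact Nat.sub_pos_of_lt hdm

theorem inr_mem_Bset_of_val_sub_modEq (hdm : d < m) (hpq : (p - q).val ≡ d + 1 [MOD m]) :
    Sum.inr q ∈ Bset m d p := by
  have := p.neZero
  have hdvd : m ∣ (q - p).val + (d + 1) := by
    have hcycle := val_sub_add_val_sub_modEq q p p
    rw [sub_self, Fin.val_zero] at hcycle
    exact Nat.modEq_zero_iff_dvd.mp ((hpq.add_left _).symm.trans hcycle)
  have hlt := (q - p).isLt
  have heq : (q - p).val + (d + 1) = m := Nat.eq_of_dvd_of_lt_two_mul (by omega) hdvd (by omega)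
  rw [inr_mem_Bset_iff]
  omega

theorem lt_val_sub_of_inr_mem_Bset (hpq : (p - q).val ≡ d + 1 [MOD m])
    (hq : Sum.inr q ∈ Bset m d s) (hps : p ≠ s) : d < (p - s).val := by
  have := p.neZero
  rw [inr_mem_Bset_iff] at hq
  have hmod : (p - s).val ≡ (q - s).val + (d + 1) [MOD m] :=
    (val_sub_add_val_sub_modEq q s p).symm.trans (hpq.add_left _)
  have hne : (q - s).val + (d + 1) ≠ m := by
    intro hm
    rw [hm] at hmod
    have hzero : (p - s).val = 0 :=
      (hmod.trans (Nat.modEq_zero_iff_dvd.mpr dvd_rfl)).eq_of_lt_of_lt (p - s).isLt p.pos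
    exact hps (sub_eq_zero.mp (Fin.ext hzero))
  have heq : (p - s).val = (q - s).val + (d + 1) :=
    hmod.eq_of_lt_of_lt (p - s).isLt (by omega)
  omega

theorem inr_mem_Bset_of_inr_notMem_Bset (hp : Sum.inr p ∈ Bset m d s) (hdp : d ≤ (p - s).val)
    (hx : Sum.inr x ∉ Bset m d p) : Sum.inr x ∈ Bset m d s := by
  rw [inr_mem_Bset_iff] at hp hx ⊢
  have := (x - p).isLt
  have hmod : (p - s).val + (x - p).val - m ≡ (x - s).val [MOD m] :=
    (Nat.mod_eq_sub_mod (by omega)).symm.trans (val_sub_add_val_sub_modEq p s x)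
  have heq : (p - s).val + (x - p).val - m = (x - s).val :=
    hmod.eq_of_lt_of_lt (by omega) (x - s).isLt
  omega

theorem val_sub_modEq_of_add_eq_add {n : ℕ} (hpq : q.val + n = p.val + m) :
    (p - q).val ≡ n [MOD m] := by
  rw [Fin.val_sub, show m - q.val + p.val = n by omega]
  exact Nat.mod_modEq n m

theorem inr_notMem_Bset_of_lt_or_lt (hpq : q.val + (d + 1) = p.val + m) (hx : q < x ∨ x < p) :
    Sum.inr x ∉ Bset m d p := by
  rw [inr_mem_Bset_iff, not_lt]
  rcases lt_or_ge x p with hxp | hpx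
  · rw [Fin.coe_sub_iff_lt.mpr hxp]
    omega
  · rw [Fin.sub_val_of_le hpx]
    omega

end Arcs

theorem stmt7_general {m d : ℕ} {σ : Finset (Fin m ⊕ Fin m)} {p q x i : Fin m}
    (hσ : ∀ s : Fin m, ¬ σ ⊆ Bset m d s) (hp : Sum.inr p ∈ σ) (hq : Sum.inr q ∈ σ)
    (hpq : (p - q).val ≡ d + 1 [MOD m]) (hx : Sum.inr x ∉ Bset m d p)
    (hi : Sum.inr i ∉ Bset m d p) (hix : i ≠ x) (s : Fin m) :
    ¬ (insert (Sum.inr i) σ).erase (Sum.inr x) ⊆ Bset m d s := by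
  intro hsub
  have mem_arc {y : Fin m} (hy : Sum.inr y ∈ insert (Sum.inr i) σ) (hyx : y ≠ x) :
      Sum.inr y ∈ Bset m d s :=
    hsub (mem_erase.mpr ⟨Sum.inr_injective.ne hyx, hy⟩)
  have his : Sum.inr i ∈ Bset m d s := mem_arc (mem_insert_self _ _) hix
  have hdm : d < m := by have := inr_mem_Bset_iff.mp his; omega
  have hps : Sum.inr p ∈ Bset m d s :=
    mem_arc (mem_insert_of_mem hp) fun h => hx (h ▸ inr_mem_Bset_self hdm)
  have hqs : Sum.inr q ∈ Bset m d s :=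
    mem_arc (mem_insert_of_mem hq) fun h => hx (h ▸ inr_mem_Bset_of_val_sub_modEq hdm hpq)
  have hne : p ≠ s := fun h => hi (h ▸ his)
  have hxs : Sum.inr x ∈ Bset m d s :=
    inr_mem_Bset_of_inr_notMem_Bset hps (lt_val_sub_of_inr_mem_Bset hpq hqs hne).le hx
  exact hσ s ((subset_insert _ _).trans ((erase_subset_iff_of_mem hxs).mp hsub))

/-- 0-based indices: let `σ = {b_0, b_{j2}, …, b_k} ⊆ B` (with `0 < j2` the
second-smallest and `k` the largest subscript) be contained in no `B_s`; assume `j2 ≤ d` and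
`k = j2 + m - d - 1`.  Then for every `i` with `0 < i`, `b_i ∉ σ` and either `i > k` or
`i < j2`, the set `(σ ∪ {b_i}) \ {b_0}` is contained in no `B_s`. -/
theorem stmt7 (m d : ℕ) (hd : 1 ≤ d) (hdm : d ≤ m)
    (σ : Finset (Fin m ⊕ Fin m)) (hB : onlyB m σ) (j2 k : ℕ)
    (h0 : hasB m σ 0)
    (hj2mem : hasB m σ j2) (hj2pos : 0 < j2)
    (hj2min : ∀ j : Fin m, Sum.inr j ∈ σ → j.val = 0 ∨ j2 ≤ j.val)
    (hkmem : hasB m σ k)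
    (hkmax : ∀ j : Fin m, Sum.inr j ∈ σ → j.val ≤ k)
    (hM : ∀ s : Fin m, ¬ σ ⊆ Bset m d s)
    (hj2d : j2 ≤ d) (hk : k = j2 + m - d - 1) :
    ∀ i : Fin m, 0 < i.val → Sum.inr i ∉ σ → (k < i.val ∨ i.val < j2) →
      ∀ j0 : Fin m, j0.val = 0 →
        ∀ s : Fin m, ¬ (insert (Sum.inr i) σ).erase (Sum.inr j0) ⊆ Bset m d s := by
  obtain ⟨p, rfl, hp⟩ := hj2mem
  obtain ⟨q, hqk, hq⟩ := hkmem
  have hgap : q.val + (d + 1) = p.val + m := by omega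
  exact fun i hi _ hik x hx => stmt7_general hM hp hq (val_sub_modEq_of_add_eq_add hgap)
    (inr_notMem_Bset_of_lt_or_lt hgap (by omega))
    (inr_notMem_Bset_of_lt_or_lt hgap (by omega)) (by omega)
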